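/- arXiv:2102.02081 — 4 statements merged into one kernel-verified Lean document; each statement's English description precedes it below -/
import Mathlib

section
/- For every integer q ≥ 2 and every integer d ≥ 2, gcd(q^d + 1, q^2 - q - 1) = gcd(q^2 - q - 1, F_d · q + F_{d-1} + 1), where F_k denotes the k-th Fibonacci number. -/
/-!
Modulo `q ^ 2 - q - 1` we have `q ^ 2 ≡ q + 1`, so the powers of `q` satisfy the Fibonacci
recursion and `q ^ d ≡ F_d * q + F_{d-1}`. Congruent elements have the same gcd with the modulus.
-/

theorem sq_sub_self_sub_one_dvd_pow_succ_sub_fib {R : Type*} [CommRing R] (q : R) (n : ℕ) :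
    q ^ 2 - q - 1 ∣ q ^ (n + 1) - (Nat.fib (n + 1) * q + Nat.fib n) := by
  induction n with
  | zero => simp
  | succ n ih =>
    have fib_step : q ^ (n + 2) - (Nat.fib (n + 2) * q + Nat.fib (n + 1)) =
        (q ^ (n + 1) - (Nat.fib (n + 1) * q + Nat.fib n)) * q +
          (q ^ 2 - q - 1) * Nat.fib (n + 1) := by
      rw [Nat.fib_add_two]
      push_cast
      ring
    rw [fib_step]
    exact dvd_add (ih.mul_right q) (dvd_mul_right _ _)

theorem stmt_7_general {R : Type*} [CommRing R] [NormalizedGCDMonoid R] (q c : R) (n : ℕ) :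
    gcd (q ^ (n + 1) + c) (q ^ 2 - q - 1) =
      gcd (q ^ 2 - q - 1) (Nat.fib (n + 1) * q + Nat.fib n + c) := by
  rw [gcd_comm]
  apply gcd_eq_of_dvd_sub_right
  rw [add_sub_add_right_eq_sub]
  exact sq_sub_self_sub_one_dvd_pow_succ_sub_fib q n

/-- `gcd(q^d + 1, q^2 - q - 1) = gcd(q^2 - q - 1, F_d q + F_{d-1} + 1)`. -/
theorem stmt_7 (q : ℤ) (hq : 2 ≤ q) (d : ℕ) (hd : 2 ≤ d) :
    Int.gcd (q ^ d + 1) (q ^ 2 - q - 1) =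
      Int.gcd (q ^ 2 - q - 1) ((Nat.fib d : ℤ) * q + (Nat.fib (d - 1) : ℤ) + 1) := by
  obtain ⟨n, rfl⟩ := Nat.exists_eq_add_of_le' (one_le_two.trans hd)
  exact Int.natCast_inj.mp (stmt_7_general q 1 n)
end

section
/- Let d ≥ 2 be an integer and q an integer. If t is a positive integer dividing both q^d + 1 and q^2 - q - 1, and gcd(t, F_d) = 1, then t divides F_{d+1} + F_{d-1} + 1 + (-1)^d. -/
/-!
The roots `x` and `1 - x` of `X ^ 2 - X - 1` have product `-1`, and their `d`-th powers sum to the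
`d`-th Lucas number `F_{d+1} + F_{d-1}`. Expanding `(x ^ d + 1) * ((1 - x) ^ d + 1)` therefore gives
exactly `F_{d+1} + F_{d-1} + 1 + (-1) ^ d`, and modulo `t` the first factor vanishes at `x = q`.
-/

theorem pow_succ_eq_fib_mul_add_fib {R : Type*} [Semiring R] {x : R} (hx : x ^ 2 = x + 1) (n : ℕ) :
    x ^ (n + 1) = Nat.fib (n + 1) * x + Nat.fib n := by
  induction n with
  | zero => simp
  | succ n ih =>
    calc x ^ (n + 1 + 1)
        = Nat.fib (n + 1) * x ^ 2 + Nat.fib n * x := by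
          rw [pow_succ, ih, add_mul, mul_assoc, ← sq]
      _ = (Nat.fib n + Nat.fib (n + 1)) * x + Nat.fib (n + 1) := by
          rw [hx, mul_add, mul_one, add_mul]
          abel
      _ = Nat.fib (n + 1 + 1) * x + Nat.fib (n + 1) := by
          rw [Nat.fib_add_two, Nat.cast_add]

section CommRing

variable {R : Type*} [CommRing R]

theorem pow_succ_add_pow_succ_eq_fib_add_fib {x y : R} (hadd : x + y = 1) (hmul : x * y = -1)
    (n : ℕ) : x ^ (n + 1) + y ^ (n + 1) = Nat.fib (n + 2) + Nat.fib n := by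
  have hx : x ^ 2 = x + 1 := by linear_combination x * hadd - hmul
  have hy : y ^ 2 = y + 1 := by linear_combination y * hadd - hmul
  calc x ^ (n + 1) + y ^ (n + 1)
      = Nat.fib (n + 1) * (x + y) + 2 * Nat.fib n := by
        rw [pow_succ_eq_fib_mul_add_fib hx, pow_succ_eq_fib_mul_add_fib hy]
        ring
    _ = Nat.fib (n + 2) + Nat.fib n := by
        rw [hadd, Nat.fib_add_two, Nat.cast_add]
        ring

theorem pow_succ_add_one_mul_pow_succ_add_one {x y : R} (hadd : x + y = 1) (hmul : x * y = -1)
    (n : ℕ) : (x ^ (n + 1) + 1) * (y ^ (n + 1) + 1) =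
      Nat.fib (n + 2) + Nat.fib n + 1 + (-1) ^ (n + 1) := by
  rw [← pow_succ_add_pow_succ_eq_fib_add_fib hadd hmul, ← hmul, mul_pow]
  ring

theorem stmt_8_general {d : ℕ} (hd : d ≠ 0) {q t : R} (hpow : t ∣ q ^ d + 1)
    (hquad : t ∣ q ^ 2 - q - 1) :
    t ∣ (Nat.fib (d + 1) : R) + Nat.fib (d - 1) + 1 + (-1) ^ d := by
  obtain ⟨n, rfl⟩ := Nat.exists_eq_succ_of_ne_zero hd
  simp only [← Ideal.Quotient.eq_zero_iff_dvd, map_add, map_sub, map_pow, map_one, map_neg,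
    map_natCast] at hpow hquad ⊢
  set x := Ideal.Quotient.mk (Ideal.span {t}) q
  have hmul : x * (1 - x) = -1 := by linear_combination -hquad
  calc _ = (x ^ (n + 1) + 1) * ((1 - x) ^ (n + 1) + 1) :=
        (pow_succ_add_one_mul_pow_succ_add_one (add_sub_cancel x 1) hmul n).symm
    _ = 0 := by rw [hpow, zero_mul]

end CommRing

/-- Any positive divisor `t` of `gcd(q^d + 1, q^2 - q - 1)` coprime to `F_d`
divides `F_{d+1} + F_{d-1} + 1 + (-1)^d`. -/
theorem stmt_8 (d : ℕ) (hd : 2 ≤ d) (q : ℤ) (t : ℕ) (ht : 0 < t)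
    (ht1 : (t : ℤ) ∣ q ^ d + 1) (ht2 : (t : ℤ) ∣ q ^ 2 - q - 1)
    (hcop : Nat.gcd t (Nat.fib d) = 1) :
    (t : ℤ) ∣ (Nat.fib (d + 1) : ℤ) + (Nat.fib (d - 1) : ℤ) + 1 + (-1) ^ d :=
  stmt_8_general (by omega) ht1 ht2
end

section
/- Let d ≥ 2 be an even integer. Then every prime t ≠ 5 dividing F_{d+1} + F_{d-1} + 1 + (-1)^d (which equals L_d + 2, L_d being the d-th Lucas number) also divides F_d. -/
/-!
The identity `L_n ^ 2 - 5 * F_n ^ 2 = 4 * (-1) ^ n` gives, for even `n`,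
`5 * F_n ^ 2 = (L_n + 2) * (L_n - 2)`. A squarefree divisor of `L_n + 2` that is coprime to `5`
therefore divides `F_n ^ 2`, and hence `F_n`.
-/

/-- The Lucas numbers `L_n`, extended to all integer indices through `L_n = F_{n+1} + F_{n-1}`
and normalised so that `L_0 = 2` and `L_1 = 1`. -/
def lucas (n : ℤ) : ℤ :=
  Int.fib (n + 1) + Int.fib (n - 1)

theorem lucas_natCast {d : ℕ} (hd : 1 ≤ d) :
    lucas d = (Nat.fib (d + 1) : ℤ) + (Nat.fib (d - 1) : ℤ) := by
  rw [lucas, ← Int.fib_natCast, ← Int.fib_natCast, Nat.cast_add_one, Nat.cast_pred hd]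

theorem lucas_sq_sub_five_mul_fib_sq (n : ℤ) :
    lucas n ^ 2 - 5 * Int.fib n ^ 2 = 4 * (-1) ^ n.natAbs := by
  have cassini := Int.fib_succ_mul_fib_pred_sub_fib_sq n
  have recurrence : Int.fib (n + 1) = Int.fib (n - 1) + Int.fib n := by
    convert Int.fib_add_two (n - 1) using 2 <;> ring_nf
  rw [lucas, ← cassini, recurrence]
  ring

theorem lucas_add_two_dvd_five_mul_fib_sq {n : ℤ} (hn : Even n) :
    lucas n + 2 ∣ 5 * Int.fib n ^ 2 := by
  have identity := lucas_sq_sub_five_mul_fib_sq n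
  rw [(Int.natAbs_even.2 hn).neg_one_pow] at identity
  exact ⟨lucas n - 2, by linear_combination -identity⟩

theorem stmt_13_general {n t : ℤ} (hn : Even n) (ht : Squarefree t) (ht5 : IsCoprime t 5)
    (htdvd : t ∣ lucas n + 2) : t ∣ Int.fib n := by
  have dvd_five_mul_sq : t ∣ 5 * Int.fib n ^ 2 :=
    htdvd.trans (lucas_add_two_dvd_five_mul_fib_sq hn)
  exact (ht.dvd_pow_iff_dvd two_ne_zero).1 (ht5.dvd_of_dvd_mul_left dvd_five_mul_sq)

/-- For even `d ≥ 2`, every prime `t ≠ 5` dividing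
`F_{d+1} + F_{d-1} + 1 + (-1)^d` also divides `F_d`. -/
theorem stmt_13 (d : ℕ) (hd : 2 ≤ d) (hdeven : Even d) (t : ℕ) (ht : t.Prime) (ht5 : t ≠ 5)
    (htdvd : (t : ℤ) ∣ (Nat.fib (d + 1) : ℤ) + (Nat.fib (d - 1) : ℤ) + 1 + (-1) ^ d) :
    t ∣ Nat.fib d := by
  rw [hdeven.neg_one_pow, ← lucas_natCast (one_le_two.trans hd), add_assoc,
    one_add_one_eq_two] at htdvd
  have coprime_five : IsCoprime (t : ℤ) 5 :=
    Nat.isCoprime_iff_coprime.2 ((Nat.coprime_primes ht Nat.prime_five).2 ht5)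
  exact Int.natCast_dvd_natCast.1 <|
    stmt_13_general hdeven.natCast (Int.squarefree_natCast.2 ht.squarefree) coprime_five htdvd
end

section
/- Let q = p^r be a prime power, let n be an even positive integer, and let F be a field with q^n elements. Suppose α ∈ F is nonzero and satisfies α^{q+2} = 1 and α^{(q^n - 1)/(q^2 - 1)} = 1. Then α^{(2^n - 1)/3} = 1. (Consequently α^H = 1 where H = gcd(q + 2, (2^n - 1)/3).) -/
/-!
Since `q ≡ -c` modulo `q + c`, we have `q ^ 2 ≡ c ^ 2`, so the geometric sums
`(q ^ n - 1) / (q ^ 2 - 1)` and `(c ^ n - 1) / (c ^ 2 - 1)` are congruent modulo `q + c`.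
They are therefore interchangeable as exponents of any `x` with `x ^ (q + c) = 1`; take `c = 2`.
-/

theorem sq_modEq_sq_mod_add (a b : ℕ) : a ^ 2 ≡ b ^ 2 [MOD a + b] := by
  rw [Nat.modEq_iff_dvd]
  push_cast
  exact ⟨b - a, by ring⟩

theorem geomSum_modEq_geomSum {a b d : ℕ} (hab : a ≡ b [MOD d]) (m : ℕ) :
    ∑ k ∈ Finset.range m, a ^ k ≡ ∑ k ∈ Finset.range m, b ^ k [MOD d] :=
  Nat.ModEq.sum fun k _ ↦ hab.pow k

theorem pow_sub_one_div_sq_sub_one_eq_geomSum {a : ℕ} (ha : 2 ≤ a) (m : ℕ) :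
    (a ^ (2 * m) - 1) / (a ^ 2 - 1) = ∑ k ∈ Finset.range m, (a ^ 2) ^ k := by
  rw [pow_mul, Nat.geomSum_eq (ha.trans (Nat.le_self_pow two_ne_zero a))]

theorem pow_sub_one_div_sq_sub_one_modEq {a b n : ℕ} (ha : 2 ≤ a) (hb : 2 ≤ b) (hn : Even n) :
    (a ^ n - 1) / (a ^ 2 - 1) ≡ (b ^ n - 1) / (b ^ 2 - 1) [MOD a + b] := by
  obtain ⟨m, rfl⟩ := hn.two_dvd
  rw [pow_sub_one_div_sq_sub_one_eq_geomSum ha, pow_sub_one_div_sq_sub_one_eq_geomSum hb]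
  exact geomSum_modEq_geomSum (sq_modEq_sq_mod_add a b) m

theorem stmt_17_general {M : Type*} [Monoid M] {x : M} {q c n : ℕ} (hq : 2 ≤ q) (hc : 2 ≤ c)
    (hn : Even n) (hx : x ^ (q + c) = 1) :
    x ^ ((q ^ n - 1) / (q ^ 2 - 1)) = x ^ ((c ^ n - 1) / (c ^ 2 - 1)) :=
  pow_eq_pow_of_modEq (pow_sub_one_div_sq_sub_one_modEq hq hc hn) hx

/-- For `n` even, if `α ≠ 0` satisfies `α^(q+2) = 1` and
`α^((q^n-1)/(q^2-1)) = 1`, then `α^((2^n-1)/3) = 1`. -/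
theorem stmt_17 (p r q n : ℕ) (hp : p.Prime) (hr : 0 < r) (hq : q = p ^ r)
    (hn : 0 < n) (hneven : Even n)
    (F : Type*) [Field F] [Fintype F] (hF : Fintype.card F = q ^ n)
    (α : F) (hα0 : α ≠ 0) (h1 : α ^ (q + 2) = 1) (h2 : α ^ ((q ^ n - 1) / (q ^ 2 - 1)) = 1) :
    α ^ ((2 ^ n - 1) / 3) = 1 := by
  have two_le_q : 2 ≤ q := hq ▸ hp.two_le.trans (Nat.le_self_pow hr.ne' p)
  exact (stmt_17_general two_le_q le_rfl hneven h1).symm.trans h2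
end
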